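/- Let q be a prime power and let r, M, N be positive integers with q ≥ N > M > 1 and r odd. Suppose D_1 ⊆ D_r are nested linear codes over F_q, where D_1 is a [q+1, 1, q+1]_q MDS code and D_r is a [q+1, r, q+2-r]_q MDS code. Let C_1 = ⋯ = C_{M-1} = D_r, C_M = D_1, and let C = (C_1,...,C_M)·A be the matrix-product code, where A is an M×N NSC matrix over F_q. If (r-1)(N-M+1) + r ≤ q + 2, then C is an optimal (r, q+2-r)-LRC with parameters [N(q+1), (M-1)r+1, (N-M+1)(q+1)]_q. -/

import Mathlib

namespace LRCPaper

noncomputable section Defs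

variable {F : Type} [Field F] [Fintype F] [DecidableEq F]

/-- The punctured code of `C` on the coordinate set `S`: delete all coordinates outside `S`. -/
def punctureCode {ι : Type} [Fintype ι] (C : Submodule F (ι → F)) (S : Finset ι) :
    Submodule F ({ x // x ∈ S } → F) :=
  C.map (LinearMap.funLeft F F (fun j : { x // x ∈ S } => (j : ι)))

/-- Every nonzero codeword of `C` has Hamming weight at least `δ`
(i.e. the minimum distance of `C` is at least `δ`). -/
def minWtGe {ι : Type} [Fintype ι] (C : Submodule F (ι → F)) (δ : ℕ) : Prop :=
  ∀ c ∈ C, c ≠ 0 → δ ≤ hammingNorm c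

/-- The minimum Hamming distance of the linear code `C` is exactly `d`. -/
def minDistIs {ι : Type} [Fintype ι] (C : Submodule F (ι → F)) (d : ℕ) : Prop :=
  (∃ c ∈ C, c ≠ 0 ∧ hammingNorm c = d) ∧ minWtGe C d

/-- The `i`-th code symbol of `C` has `(r, δ)`-locality. -/
def symbolHasLocality {ι : Type} [Fintype ι] (C : Submodule F (ι → F)) (r δ : ℕ) (i : ι) :
    Prop :=
  ∃ S : Finset ι, i ∈ S ∧ S.card ≤ r + δ - 1 ∧ minWtGe (punctureCode C S) δ

/-- `C` is an `(r, δ)`-locally repairable code. -/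
def IsLRC {ι : Type} [Fintype ι] (C : Submodule F (ι → F)) (r δ : ℕ) : Prop :=
  ∀ i : ι, symbolHasLocality C r δ i

/-- The right-hand side `n - k + 1 - (⌈k/r⌉ - 1)(δ - 1)` of the Singleton-type bound
for `(r, δ)`-LRCs, as an integer. -/
def optBound (n k r δ : ℕ) : ℤ :=
  (n : ℤ) - (k : ℤ) + 1 - (⌈(k : ℚ) / (r : ℚ)⌉ - 1) * ((δ : ℤ) - 1)

/-- `C` is an optimal `(r, δ)`-LRC with parameters `[card ι, k, d]`. -/
def IsOptimalLRC {ι : Type} [Fintype ι] (C : Submodule F (ι → F)) (k d r δ : ℕ) : Prop :=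
  IsLRC C r δ ∧ Module.finrank F ↥C = k ∧ minDistIs C d ∧
    (d : ℤ) = optBound (Fintype.card ι) k r δ

/-- `C` is an optimal `(r, δ)`-LRC (its minimum distance meets the Singleton-type bound). -/
def IsOptimalLRCCode {ι : Type} [Fintype ι] (C : Submodule F (ι → F)) (r δ : ℕ) : Prop :=
  IsLRC C r δ ∧ ∃ d : ℕ, minDistIs C d ∧
    (d : ℤ) = optBound (Fintype.card ι) (Module.finrank F ↥C) r δ

/-- The linear map underlying the matrix-product construction: it sends
`(c_1, …, c_M)` to `(∑_ℓ c_ℓ a_{ℓ,1}, …, ∑_ℓ c_ℓ a_{ℓ,N})`. -/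
def mpMap {ι : Type} [Fintype ι] {M N : ℕ} (A : Matrix (Fin M) (Fin N) F) :
    (Fin M → ι → F) →ₗ[F] (Fin N × ι → F) where
  toFun c := fun p => ∑ ℓ : Fin M, c ℓ p.2 * A ℓ p.1
  map_add' x y := by
    funext p
    simp [add_mul, Finset.sum_add_distrib]
  map_smul' a x := by
    funext p
    simp [Finset.mul_sum, mul_assoc]

/-- The matrix-product code `(C_1, …, C_M) · A`, a linear code of length `N * card ι`
with coordinates indexed by `Fin N × ι`. -/
def matrixProductCode {ι : Type} [Fintype ι] {M N : ℕ}
    (Cs : Fin M → Submodule F (ι → F)) (A : Matrix (Fin M) (Fin N) F) :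
    Submodule F (Fin N × ι → F) :=
  (Submodule.pi Set.univ Cs).map (mpMap A)

/-- The linear code of length `N` generated by the first `i` rows of `A`. -/
def rowSpanCode {M N : ℕ} (A : Matrix (Fin M) (Fin N) F) (i : ℕ) :
    Submodule F (Fin N → F) :=
  Submodule.span F {w : Fin N → F | ∃ ℓ : Fin M, (ℓ : ℕ) < i ∧ w = A ℓ}

/-- `A` is nonsingular by columns (NSC): for every `i ≤ M`, every `i × i` submatrix
formed by choosing `i` columns of the first `i` rows of `A` is nonsingular. -/
def IsNSC {M N : ℕ} (A : Matrix (Fin M) (Fin N) F) : Prop :=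
  ∀ (i : ℕ) (hi : i ≤ M) (f : Fin i → Fin N), StrictMono f →
    (Matrix.of fun a b : Fin i => A (Fin.castLE hi a) (f b)).det ≠ 0

/-- Evaluation map underlying generalized Reed–Solomon codes:
`p ↦ (v_1 p(a_1), …, v_n p(a_n))`. -/
def grsMap {n : ℕ} (a v : Fin n → F) : Polynomial F →ₗ[F] (Fin n → F) where
  toFun p := fun i => v i * Polynomial.eval (a i) p
  map_add' p q := by funext i; simp [mul_add]
  map_smul' c p := by funext i; simp [mul_left_comm]

/-- The generalized Reed–Solomon code `GRS_k(a, v)`. -/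
def GRSCode {n : ℕ} (k : ℕ) (a v : Fin n → F) : Submodule F (Fin n → F) :=
  (Polynomial.degreeLT F k).map (grsMap a v)

/-- The set of indices of nonzero columns of `H`. -/
def colSupport {m n : ℕ} (H : Matrix (Fin m) (Fin n) F) : Finset (Fin n) :=
  Finset.univ.filter fun j => ∃ i, H i j ≠ 0

/-- Entry `(i, j)` (0-based) of the `2(δ-1) × (2m-1)` matrix `Ĥ`, built from the distinct
elements `α 0, …, α (m-1)` and nonzero scalars `lam 0, …, lam (m-1)`. -/
def hatEntry (δ m : ℕ) (α lam : ℕ → F) (i j : ℕ) : F :=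
  if i < δ - 1 then (if j < m then lam j * α j ^ i else 0)
  else (if m - 1 ≤ j then lam (2 * m - 2 - j) * α (2 * m - 2 - j) ^ (i - (δ - 1)) else 0)

/-- Entry `(i, j)` (0-based) of the `v(δ-1) × (vm-1)` block-diagonal matrix
`ℋ = H ⊕ ⋯ ⊕ H ⊕ Ĥ` (`v - 2` diagonal copies of `H` followed by `Ĥ`). -/
def calHEntry (δ m v : ℕ) (α lam : ℕ → F) (i j : ℕ) : F :=
  if i < (v - 2) * (δ - 1) then
    (if j < (v - 2) * m ∧ j / m = i / (δ - 1) then lam (j % m) * α (j % m) ^ (i % (δ - 1))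
      else 0)
  else
    (if (v - 2) * m ≤ j then hatEntry δ m α lam (i - (v - 2) * (δ - 1)) (j - (v - 2) * m)
      else 0)

/-- Entry `(i, j)` (0-based) of the `(v(δ-1)+τ) × (vm-1)` matrix `H̃`, obtained by appending
the row block `(A, …, A, Â)` below `ℋ`. -/
def tildeHEntry (δ m v : ℕ) (α lam : ℕ → F) (i j : ℕ) : F :=
  if i < v * (δ - 1) then calHEntry δ m v α lam i j
  else
    lam (if j < (v - 2) * m then j % m
          else (if j - (v - 2) * m < m then j - (v - 2) * m
                else 2 * m - 2 - (j - (v - 2) * m))) *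
      α (if j < (v - 2) * m then j % m
          else (if j - (v - 2) * m < m then j - (v - 2) * m
                else 2 * m - 2 - (j - (v - 2) * m))) ^
        ((δ - 1) + (i - v * (δ - 1)))

end Defs

/-!
Let `n` be the length of `D_1` and `D_r`. If `c l` is the last nonzero component of
`(c_1, …, c_M)`, then for every coordinate `x` in its support the coefficient vector
`(c_1 x, …, c_M x)` ends at row `l`, so nonsingularity by columns leaves at most `l` zeros
(counting `l` from `0`) among the `N` symbols over `x`. Hence the codeword has weight at least
`(N - l) * hammingNorm (c l)`. For `l = M - 1` this is at least `(N - M + 1) * n`. For `l < M - 1`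
it is at least `(N - M + 2) * (n + 1 - r)`, and
`(N - M + 2) * (n + 1 - r) - (N - M + 1) * n = n + 1 - r - (r - 1) * (N - M + 1)`
is nonnegative by the numerical condition.

The value `(N - M + 1) * n` is attained by `(v ᵥ* A) ⊗ d` with `d ∈ D_1` nonzero and `v ᵥ* A` a
word of the row space of `A` that vanishes on `M - 1` columns. Each block of a codeword lies in
`D_r`, whence the locality.
-/

section HammingWeight

variable {ι κ R : Type*} [Fintype ι] [Fintype κ] [DecidableEq R]

theorem hammingNorm_comp_le_of_injective [Zero R] {f : κ → ι} (hf : f.Injective) (w : ι → R) :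
    hammingNorm (w ∘ f) ≤ hammingNorm w :=
  Finset.card_le_card_of_injOn f (fun k hk => by simpa using hk) hf.injOn

theorem hammingNorm_prod_eq_sum [Zero R] (w : κ × ι → R) :
    hammingNorm w = ∑ x, hammingNorm fun j => w (j, x) := by
  simp only [hammingNorm, Finset.card_filter]
  exact Fintype.sum_prod_type_right _

theorem hammingNorm_fst_mul_snd [MulZeroClass R] [NoZeroDivisors R] (a : κ → R) (b : ι → R) :
    hammingNorm (fun p : κ × ι => a p.1 * b p.2) = hammingNorm a * hammingNorm b := by
  simp only [hammingNorm, ne_eq, mul_eq_zero, not_or]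
  rw [← Finset.card_product, ← Finset.filter_product, Finset.univ_product_univ]

end HammingWeight

theorem exists_ne_zero_forall_gt_eq_zero {κ : Type*} [Preorder κ] [WellFoundedGT κ]
    {V : κ → Type*} [∀ i, Zero (V i)] {c : ∀ i, V i} (hc : c ≠ 0) :
    ∃ l, c l ≠ 0 ∧ ∀ m, l < m → c m = 0 := by
  obtain ⟨l, hl, hmax⟩ := wellFounded_gt.has_min {l | c l ≠ 0} (Function.ne_iff.mp hc)
  exact ⟨l, hl, fun m hm => not_not.mp fun hcm => hmax m hcm hm⟩

theorem finrank_pi_univ {K κ : Type*} [DivisionRing K] [Fintype κ] {V : κ → Type*}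
    [∀ i, AddCommGroup (V i)] [∀ i, Module K (V i)] (p : ∀ i, Submodule K (V i))
    [∀ i, FiniteDimensional K (p i)] :
    Module.finrank K (Submodule.pi Set.univ p) = ∑ i, Module.finrank K (p i) := by
  let e : Submodule.pi Set.univ p ≃ₗ[K] ∀ i, p i :=
    { toFun x i := ⟨x.1 i, x.2 i (Set.mem_univ i)⟩
      invFun y := ⟨fun i => y i, fun i _ => (y i).2⟩
      map_add' _ _ := rfl
      map_smul' _ _ := rfl }
  rw [e.finrank_eq, Module.finrank_pi_fintype]

open Matrix in
theorem exists_hammingNorm_vecMul_le {K m n : Type*} [DivisionRing K] [DecidableEq K]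
    [Fintype m] [Nonempty m] [Fintype n] (A : Matrix m n K)
    (hmn : Fintype.card m ≤ Fintype.card n + 1) :
    ∃ v : m → K, v ≠ 0 ∧ hammingNorm (v ᵥ* A) + Fintype.card m ≤ Fintype.card n + 1 := by
  classical
  have hm : 0 < Fintype.card m := Fintype.card_pos
  obtain ⟨S, -, hS⟩ := Finset.exists_subset_card_eq
    (show Fintype.card m - 1 ≤ (Finset.univ : Finset n).card by rw [Finset.card_univ]; omega)
  obtain ⟨v, hv, hv0⟩ := Submodule.exists_mem_ne_zero_of_ne_bot <|
    LinearMap.ker_ne_bot_of_finrank_lt (f := (A.submatrix id ((↑) : S → n)).vecMulLinear)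
      (by simp only [Module.finrank_fintype_fun_eq_card, Fintype.card_coe]; omega)
  have hvS : ∀ j ∈ S, (v ᵥ* A) j = 0 := fun j hj => congrFun (LinearMap.mem_ker.mp hv) ⟨j, hj⟩
  have hsupp : hammingNorm (v ᵥ* A) ≤ Sᶜ.card := Finset.card_le_card fun j hj =>
    Finset.mem_compl.mpr fun hjS => (Finset.mem_filter.mp hj).2 (hvS j hjS)
  have hScompl := Finset.card_add_card_compl S
  exact ⟨v, hv0, by omega⟩

section Field

open Matrix

variable {F : Type} [Field F] {M N : ℕ} {A : Matrix (Fin M) (Fin N) F}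

theorem IsNSC.eq_zero_of_vecMul_comp_eq_zero (hA : IsNSC A) {i : ℕ} (hi : i ≤ M)
    {f : Fin i → Fin N} (hf : StrictMono f) {v : Fin M → F} (hv : ∀ m : Fin M, i ≤ m → v m = 0)
    (hvf : (v ᵥ* A) ∘ f = 0) : v = 0 := by
  have hhead : (fun a => v (Fin.castLE hi a)) = 0 := by
    refine Matrix.eq_zero_of_vecMul_eq_zero (hA i hi f hf) ?_
    rw [← hvf]
    funext b
    refine Fintype.sum_of_injective _ (Fin.castLE_injective hi) _ _ (fun m hm => ?_) fun _ => rfl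
    rw [hv m (not_lt.mp fun hlt => hm ⟨⟨m, hlt⟩, rfl⟩), zero_mul]
  funext m
  rcases lt_or_ge (m : ℕ) i with hm | hm
  · exact congrFun hhead ⟨m, hm⟩
  · exact hv m hm

theorem IsNSC.le_hammingNorm_vecMul_add [DecidableEq F] (hA : IsNSC A) {v : Fin M → F}
    {l : Fin M} (hl : v l ≠ 0) (hv : ∀ m, l < m → v m = 0) : N ≤ hammingNorm (v ᵥ* A) + l := by
  by_contra! hlt
  have hsum := Finset.card_filter_add_card_filter_not (s := .univ) fun j => (v ᵥ* A) j ≠ 0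
  rw [Finset.card_univ, Fintype.card_fin] at hsum
  obtain ⟨T, hT, hTcard⟩ : ∃ T ⊆ Finset.univ.filter (fun j => ¬(v ᵥ* A) j ≠ 0), T.card = l + 1 :=
    Finset.exists_subset_card_eq (by rw [hammingNorm] at hlt; omega)
  have hvT : (v ᵥ* A) ∘ T.orderEmbOfFin hTcard = 0 := funext fun b =>
    not_not.mp (Finset.mem_filter.mp (hT (T.orderEmbOfFin_mem hTcard b))).2
  exact hl <| congrFun (hA.eq_zero_of_vecMul_comp_eq_zero l.2 (T.orderEmbOfFin hTcard).strictMono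
    (fun m hm => hv m hm) hvT) l

section Locality

variable {ι κ : Type} [Fintype ι] [Fintype κ]

theorem symbolHasLocality_of_embedding [DecidableEq F] {C : Submodule F (ι → F)} {r δ : ℕ}
    (e : κ ↪ ι) (hcard : Fintype.card κ ≤ r + δ - 1)
    (hC : ∀ c ∈ C, c ∘ e ≠ 0 → δ ≤ hammingNorm (c ∘ e)) (k : κ) :
    symbolHasLocality C r δ (e k) := by
  refine ⟨Finset.univ.map e, by simp, by simpa using hcard, ?_⟩
  rintro _ ⟨c, hc, rfl⟩ hne
  have hce : c ∘ e ≠ 0 := by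
    contrapose! hne
    funext ⟨_, hx⟩
    obtain ⟨k, -, rfl⟩ := Finset.mem_map.mp hx
    exact congrFun hne k
  let g : κ → {x // x ∈ Finset.univ.map e} := fun k => ⟨e k, by simp⟩
  have hg : g.Injective := fun _ _ h => e.injective (congrArg Subtype.val h)
  exact (hC c hc hce).trans (hammingNorm_comp_le_of_injective hg fun x => c x)

end Locality

section MatrixProduct

variable {ι : Type} [Fintype ι]

theorem mpMap_apply_eq_vecMul (c : Fin M → ι → F) (j : Fin N) (x : ι) :
    mpMap A c (j, x) = ((fun m => c m x) ᵥ* A) j :=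
  rfl

theorem mpMap_block_eq_sum (c : Fin M → ι → F) (j : Fin N) :
    (fun x => mpMap A c (j, x)) = ∑ m, A m j • c m := by
  funext x
  simp [mpMap, mul_comm]

theorem isLRC_matrixProductCode [DecidableEq F] {Cs : Fin M → Submodule F (ι → F)}
    {D : Submodule F (ι → F)} {r δ : ℕ} (hCs : ∀ l, Cs l ≤ D) (hD : minWtGe D δ)
    (hcard : Fintype.card ι ≤ r + δ - 1) :
    IsLRC (matrixProductCode Cs A) r δ := by
  rintro ⟨j, x⟩
  refine symbolHasLocality_of_embedding (Function.Embedding.sectR j ι) hcard ?_ x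
  rintro _ ⟨c, hc, rfl⟩ hne
  refine hD _ ?_ hne
  have hblock : mpMap A c ∘ Function.Embedding.sectR j ι = ∑ m, A m j • c m :=
    mpMap_block_eq_sum c j
  rw [hblock]
  exact D.sum_mem fun m _ => D.smul_mem _ (hCs m (hc m (Set.mem_univ m)))

theorem IsNSC.mul_hammingNorm_le_hammingNorm_mpMap [DecidableEq F] (hA : IsNSC A)
    {c : Fin M → ι → F} {l : Fin M} (hc : ∀ m, l < m → c m = 0) :
    (N - l) * hammingNorm (c l) ≤ hammingNorm (mpMap A c) := by
  have hcolumn : ∀ x ∈ Finset.univ.filter (fun x => c l x ≠ 0),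
      N - l ≤ hammingNorm fun j => mpMap A c (j, x) := fun x hx =>
    Nat.sub_le_iff_le_add.mpr <| hA.le_hammingNorm_vecMul_add (v := fun m => c m x)
      (Finset.mem_filter.mp hx).2 fun m hm => congrFun (hc m hm) x
  calc (N - l) * hammingNorm (c l)
      ≤ ∑ x with c l x ≠ 0, hammingNorm fun j => mpMap A c (j, x) := by
        rw [mul_comm]
        exact Finset.card_nsmul_le_sum _ _ _ hcolumn
    _ ≤ ∑ x, hammingNorm fun j => mpMap A c (j, x) :=
        Finset.sum_le_sum_of_subset (Finset.filter_subset _ _)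
    _ = hammingNorm (mpMap A c) := (hammingNorm_prod_eq_sum _).symm

theorem IsNSC.mpMap_injective (hA : IsNSC A) (hMN : M ≤ N) :
    Function.Injective (mpMap (ι := ι) A) := by
  classical
  refine (injective_iff_map_eq_zero _).mpr fun c hAc => ?_
  by_contra hc
  obtain ⟨l, hl, hlast⟩ := exists_ne_zero_forall_gt_eq_zero hc
  have hpos : 0 < (N - l) * hammingNorm (c l) :=
    Nat.mul_pos (Nat.sub_pos_of_lt (l.2.trans_le hMN)) (hammingNorm_pos_iff.mpr hl)
  have hle := hA.mul_hammingNorm_le_hammingNorm_mpMap hlast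
  rw [hAc, hammingNorm_zero] at hle
  exact hpos.not_ge hle

theorem IsNSC.minWtGe_matrixProductCode [DecidableEq F] (hA : IsNSC A)
    {Cs : Fin M → Submodule F (ι → F)} {d : Fin M → ℕ} {D : ℕ} (hCs : ∀ l, minWtGe (Cs l) (d l))
    (hD : ∀ l, D ≤ (N - l) * d l) :
    minWtGe (matrixProductCode Cs A) D := by
  rintro _ ⟨c, hc, rfl⟩ hne
  obtain ⟨l, hl, hlast⟩ :=
    exists_ne_zero_forall_gt_eq_zero (c := c) (by rintro rfl; exact hne (map_zero _))
  calc D ≤ (N - l) * d l := hD l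
    _ ≤ (N - l) * hammingNorm (c l) := Nat.mul_le_mul_left _ (hCs l _ (hc l (Set.mem_univ l)) hl)
    _ ≤ hammingNorm (mpMap A c) := hA.mul_hammingNorm_le_hammingNorm_mpMap hlast

theorem IsNSC.finrank_matrixProductCode (hA : IsNSC A) (hMN : M ≤ N)
    (Cs : Fin M → Submodule F (ι → F)) :
    Module.finrank F (matrixProductCode Cs A) = ∑ l, Module.finrank F (Cs l) := by
  rw [← finrank_pi_univ]
  exact (Submodule.equivMapOfInjective _ (hA.mpMap_injective hMN) _).finrank_eq.symm

theorem IsNSC.exists_mem_matrixProductCode_hammingNorm_le [DecidableEq F] (hA : IsNSC A)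
    (hM : 0 < M) (hMN : M ≤ N) {Cs : Fin M → Submodule F (ι → F)} {d : ι → F} (hd : ∀ l, d ∈ Cs l)
    (hd0 : d ≠ 0) :
    ∃ w ∈ matrixProductCode Cs A, w ≠ 0 ∧ hammingNorm w ≤ (N - M + 1) * hammingNorm d := by
  have : Nonempty (Fin M) := ⟨⟨0, hM⟩⟩
  obtain ⟨v, hv0, hv⟩ := exists_hammingNorm_vecMul_le A (by simp only [Fintype.card_fin]; omega)
  simp only [Fintype.card_fin] at hv
  let c : Fin M → ι → F := fun m => v m • d
  have hc0 : c ≠ 0 := by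
    obtain ⟨m, hm⟩ := Function.ne_iff.mp hv0
    exact Function.ne_iff.mpr ⟨m, smul_ne_zero hm hd0⟩
  have hprod : mpMap A c = fun p => (v ᵥ* A) p.1 * d p.2 := by
    funext ⟨j, x⟩
    simp only [mpMap_apply_eq_vecMul, c, vecMul, dotProduct, Pi.smul_apply, smul_eq_mul,
      Finset.sum_mul, mul_right_comm]
  refine ⟨mpMap A c, ⟨c, fun m _ => (Cs m).smul_mem _ (hd m), rfl⟩,
    (map_ne_zero_iff _ (hA.mpMap_injective hMN)).mpr hc0, ?_⟩
  rw [hprod, hammingNorm_fst_mul_snd]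
  exact Nat.mul_le_mul_right _ (by omega)

theorem IsNSC.minDistIs_matrixProductCode [DecidableEq F] (hA : IsNSC A) (hM : 0 < M)
    (hMN : M ≤ N) {Cs : Fin M → Submodule F (ι → F)} {d : Fin M → ℕ}
    (hCs : ∀ l, minWtGe (Cs l) (d l))
    (hd : ∀ l : Fin M, (N - M + 1) * Fintype.card ι ≤ (N - l) * d l)
    {e : ι → F} (he : ∀ l, e ∈ Cs l) (he0 : e ≠ 0) :
    minDistIs (matrixProductCode Cs A) ((N - M + 1) * Fintype.card ι) := by
  have hlow := hA.minWtGe_matrixProductCode hCs hd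
  obtain ⟨w, hw, hw0, hwt⟩ := hA.exists_mem_matrixProductCode_hammingNorm_le hM hMN he he0
  have hwt_card := hwt.trans (Nat.mul_le_mul_left _ hammingNorm_le_card_fintype)
  exact ⟨⟨w, hw, hw0, hwt_card.antisymm (hlow w hw hw0)⟩, hlow⟩

end MatrixProduct

theorem ceil_mul_add_one_div {r : ℕ} (hr : 0 < r) (m : ℕ) :
    ⌈((m * r + 1 : ℕ) : ℚ) / r⌉ = m + 1 := by
  have hr' : (1 : ℚ) ≤ r := by exact_mod_cast hr
  rw [Int.ceil_eq_iff, lt_div_iff₀ (by positivity), div_le_iff₀ (by positivity)]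
  push_cast
  constructor <;> linarith

theorem optBound_mul_add_one {r : ℕ} (hr : 0 < r) (n m δ : ℕ) :
    optBound n (m * r + 1) r δ = n - m * r - m * (δ - 1) := by
  rw [optBound, ceil_mul_add_one_div hr]
  push_cast
  ring

theorem mul_le_succ_mul_of_pred_mul_add_le {r t n : ℕ} (h : (r - 1) * t + r ≤ n + 1) :
    t * n ≤ (t + 1) * (n + 1 - r) := by
  cases r with
  | zero => exact Nat.mul_le_mul (by omega) (by omega)
  | succ s =>
    obtain ⟨u, hu⟩ := Nat.exists_eq_add_of_le h
    simp only [Nat.add_sub_cancel] at hu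
    obtain rfl : n = s * t + s + u := by omega
    rw [show s * t + s + u + 1 - (s + 1) = s * t + u by omega]
    nlinarith

theorem length_q_add_one_matrixProduct_optimal_general [DecidableEq F] {ι : Type}
    [Fintype ι] {r : ℕ} (hM : 0 < M) (hMN : M ≤ N) {D1 Dr : Submodule F (ι → F)} (hsub : D1 ≤ Dr)
    (hD1k : Module.finrank F D1 = 1) (hD1d : minWtGe D1 (Fintype.card ι))
    (hDrk : Module.finrank F Dr = r) (hDrd : minWtGe Dr (Fintype.card ι + 1 - r))
    (hA : IsNSC A) (hcond : (r - 1) * (N - M + 1) + r ≤ Fintype.card ι + 1) :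
    IsOptimalLRC (matrixProductCode (fun i : Fin M => if (i : ℕ) < M - 1 then Dr else D1) A)
      ((M - 1) * r + 1) ((N - M + 1) * Fintype.card ι) r (Fintype.card ι + 1 - r) := by
  let Cs : Fin M → Submodule F (ι → F) := fun i => if (i : ℕ) < M - 1 then Dr else D1
  have hCs_le (l) : Cs l ≤ Dr := by simp only [Cs]; split_ifs <;> simp [hsub]
  have hCs_ge (l) : D1 ≤ Cs l := by simp only [Cs]; split_ifs <;> simp [hsub]
  have hr : 1 ≤ r := hD1k ▸ hDrk ▸ Submodule.finrank_mono hsub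
  have hCs_finrank (l : Fin M) : Module.finrank F (Cs l) = if (l : ℕ) < M - 1 then r else 1 := by
    split_ifs with hl
    · rw [show Cs l = Dr from if_pos hl, hDrk]
    · rw [show Cs l = D1 from if_neg hl, hD1k]
  have hdim : Module.finrank F (matrixProductCode Cs A) = (M - 1) * r + 1 := by
    simp only [hA.finrank_matrixProductCode hMN, hCs_finrank]
    obtain ⟨m, rfl⟩ := Nat.exists_eq_succ_of_ne_zero hM.ne'
    simp [Fin.sum_univ_castSucc]
  have hdist : minDistIs (matrixProductCode Cs A) ((N - M + 1) * Fintype.card ι) := by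
    obtain ⟨e, he, he0⟩ := D1.exists_mem_ne_zero_of_ne_bot (by rintro rfl; simp at hD1k)
    refine hA.minDistIs_matrixProductCode hM hMN
      (d := fun l => if (l : ℕ) < M - 1 then Fintype.card ι + 1 - r else Fintype.card ι)
      (fun l => ?_) (fun l => ?_) (fun l => hCs_ge l he) he0
    · simp only [Cs]; split_ifs <;> assumption
    · split_ifs with hl
      · exact (mul_le_succ_mul_of_pred_mul_add_le hcond).trans (Nat.mul_le_mul_right _ (by omega))
      · exact Nat.mul_le_mul_right _ (by omega)
  refine ⟨isLRC_matrixProductCode hCs_le hDrd (by omega), hdim, hdist, ?_⟩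
  rw [Fintype.card_prod, Fintype.card_fin, optBound_mul_add_one hr]
  push_cast [Nat.cast_sub hMN, Nat.cast_sub (Nat.one_le_of_lt hM),
    Nat.cast_sub (le_of_add_le_right hcond)]
  ring

end Field

/-- Corollary 2: with nested MDS codes `D_1 ⊆ D_r` of length `q + 1`,
`D_1` of parameters `[q+1, 1, q+1]_q`, `D_r` of parameters `[q+1, r, q+2-r]_q`, `r` odd,
`C_1 = ⋯ = C_{M-1} = D_r`, `C_M = D_1`, and an `M × N` NSC matrix `A`, if
`(r-1)(N-M+1) + r ≤ q + 2` then the matrix-product code is an optimal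
`(r, q+2-r)`-LRC with parameters `[N(q+1), (M-1)r+1, (N-M+1)(q+1)]_q`. -/
theorem length_q_add_one_matrixProduct_optimal
    (q : ℕ) (hq : IsPrimePow q)
    (F : Type) [Field F] [Fintype F] [DecidableEq F] (hF : Fintype.card F = q)
    (r M N : ℕ) (hr : 0 < r) (hodd : Odd r) (hM : 1 < M) (hMN : M < N) (hNq : N ≤ q)
    (D1 Dr : Submodule F (Fin (q + 1) → F)) (hsub : D1 ≤ Dr)
    (hD1k : Module.finrank F ↥D1 = 1) (hD1d : minDistIs D1 (q + 1))
    (hDrk : Module.finrank F ↥Dr = r) (hDrd : minDistIs Dr (q + 2 - r))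
    (A : Matrix (Fin M) (Fin N) F) (hA : IsNSC A)
    (hcond : (r - 1) * (N - M + 1) + r ≤ q + 2) :
    IsOptimalLRC
      (matrixProductCode (fun i : Fin M => if (i : ℕ) < M - 1 then Dr else D1) A)
      ((M - 1) * r + 1) ((N - M + 1) * (q + 1)) r (q + 2 - r) := by
  simpa using length_q_add_one_matrixProduct_optimal_general hM.le hMN.le hsub hD1k
    (by simpa using hD1d.2) hDrk (by simpa using hDrd.2) hA (by simpa using hcond)

end LRCPaper
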